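/- arXiv:2311.06161 — 5 statements merged into one kernel-verified Lean document; each statement's English description precedes it below -/
import Mathlib

section
/- In a finite simple graph G, every minimal dominating set of G is a maximal irredundant set of G. -/
/-!  Common definitions: irredundance, irredundance coloring,
irredundance compelling coloring, and related graph parameters. -/

variable {V : Type*}

/-- The closed neighborhood `N[v]` of a vertex `v`. -/
def closedNbr (G : SimpleGraph V) (v : V) : Set V := insert v (G.neighborSet v)

/-- The private neighbor set `pn[v,S] = N[v] − N[S − {v}]`. -/
def pnSet (G : SimpleGraph V) (S : Set V) (v : V) : Set V :=
  closedNbr G v \ ⋃ w ∈ S \ {v}, closedNbr G w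

/-- A set `S` is irredundant if every vertex of `S` has a private neighbor. -/
def IsIrredundant (G : SimpleGraph V) (S : Set V) : Prop :=
  ∀ v ∈ S, (pnSet G S v).Nonempty

/-- A maximal irredundant set: irredundant, and adding any outside vertex
destroys irredundance. -/
def IsMaxIrredundant (G : SimpleGraph V) (S : Set V) : Prop :=
  IsIrredundant G S ∧ ∀ w ∉ S, ¬ IsIrredundant G (insert w S)

/-- The lower irredundance number `ir(G)`: the minimum cardinality of a
maximal irredundant set. -/
noncomputable def lowerIr (G : SimpleGraph V) : ℕ :=
  sInf {n | ∃ S : Set V, IsMaxIrredundant G S ∧ S.ncard = n}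

/-- A proper coloring of `G` with colors in `Fin k`, viewed as a function. -/
def IsProperColoring (G : SimpleGraph V) {k : ℕ} (C : V → Fin k) : Prop :=
  ∀ u v, G.Adj u v → C u ≠ C v

/-- `G` has an irredundance coloring with `k` colors: a proper coloring
together with a maximal irredundant set whose vertices get distinct colors. -/
def IrredColorable (G : SimpleGraph V) (k : ℕ) : Prop :=
  ∃ C : V → Fin k, IsProperColoring G C ∧
    ∃ R : Set V, IsMaxIrredundant G R ∧ Set.InjOn C R

/-- The irredundance chromatic number `χᵢ(G)`. -/
noncomputable def irChrom (G : SimpleGraph V) : ℕ := sInf {k | IrredColorable G k}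

/-- `S` is a dominating set of `G`. -/
def IsDomSet (G : SimpleGraph V) (S : Set V) : Prop :=
  ∀ v, v ∈ S ∨ ∃ u ∈ S, G.Adj u v

/-- The domination number `γ(G)`. -/
noncomputable def domNum (G : SimpleGraph V) : ℕ :=
  sInf {n | ∃ S : Set V, IsDomSet G S ∧ S.ncard = n}

/-- `G` has a gamma coloring with `k` colors: a proper coloring together with
a dominating set whose vertices get distinct colors. -/
def GammaColorable (G : SimpleGraph V) (k : ℕ) : Prop :=
  ∃ C : V → Fin k, IsProperColoring G C ∧
    ∃ D : Set V, IsDomSet G D ∧ Set.InjOn C D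

/-- The gamma chromatic number `χ_γ(G)`. -/
noncomputable def gammaChrom (G : SimpleGraph V) : ℕ := sInf {k | GammaColorable G k}

/-- A rainbow committee of the coloring `C`: a set containing exactly one
vertex of each color class. -/
def IsRainbowCommittee {k : ℕ} (C : V → Fin k) (T : Set V) : Prop :=
  ∀ i : Fin k, ∃! v, v ∈ T ∧ C v = i

/-- `C` is an irredundance compelling coloring of `G` (with all `k` colors
used): a proper coloring, onto its `k` colors, such that every rainbow
committee is an irredundant set. -/
def IsIRCColoring (G : SimpleGraph V) {k : ℕ} (C : V → Fin k) : Prop :=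
  IsProperColoring G C ∧ Function.Surjective C ∧
    ∀ T : Set V, IsRainbowCommittee C T → IsIrredundant G T

/-- `G` admits an irredundance compelling coloring. -/
def IRCColorable (G : SimpleGraph V) : Prop :=
  ∃ (k : ℕ) (C : V → Fin k), IsIRCColoring G C

/-- The irredundance compelling chromatic number `χ_irc(G)`: the maximum
number of colors among all irredundance compelling colorings of `G`. -/
noncomputable def ircChrom (G : SimpleGraph V) : ℕ :=
  sSup {k | ∃ C : V → Fin k, IsIRCColoring G C}

/-- `G` has a dominator coloring with `k` colors: a proper coloring, onto its
`k` colors, in which every vertex dominates some color class. -/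
def DominatorColorable (G : SimpleGraph V) (k : ℕ) : Prop :=
  ∃ C : V → Fin k, IsProperColoring G C ∧ Function.Surjective C ∧
    ∀ v, ∃ i : Fin k, (∀ u, C u = i → G.Adj v u) ∨ {u | C u = i} = {v}

/-- The dominator chromatic number `χ_d(G)`. -/
noncomputable def domChrom (G : SimpleGraph V) : ℕ := sInf {k | DominatorColorable G k}

section Domination

variable {G : SimpleGraph V} {S T : Set V} {v : V}

theorem isDomSet_iff_biUnion_closedNbr_eq_univ :
    IsDomSet G S ↔ ⋃ u ∈ S, closedNbr G u = Set.univ := by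
  simp only [IsDomSet, closedNbr, Set.eq_univ_iff_forall, Set.mem_iUnion₂, Set.mem_insert_iff,
    SimpleGraph.mem_neighborSet, exists_prop, and_or_left, exists_or, exists_eq_right']

theorem IsDomSet.mono (hS : IsDomSet G S) (hST : S ⊆ T) : IsDomSet G T := fun v =>
  (hS v).imp (@hST v) fun ⟨u, hu, huv⟩ => ⟨u, hST hu, huv⟩

theorem pnSet_eq_empty_of_isDomSet_sdiff_singleton (h : IsDomSet G (S \ {v})) :
    pnSet G S v = ∅ := by
  rw [pnSet, isDomSet_iff_biUnion_closedNbr_eq_univ.1 h, Set.sdiff_univ]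

theorem IsDomSet.isDomSet_sdiff_singleton_iff (hS : IsDomSet G S) :
    IsDomSet G (S \ {v}) ↔ pnSet G S v = ∅ := by
  refine ⟨pnSet_eq_empty_of_isDomSet_sdiff_singleton, fun hpn => ?_⟩
  have hv : closedNbr G v ⊆ ⋃ u ∈ S \ {v}, closedNbr G u := Set.sdiff_eq_empty.1 hpn
  have hinsert : IsDomSet G (insert v (S \ {v})) := hS.mono (Set.subset_insert_sdiff_singleton v S)
  rwa [isDomSet_iff_biUnion_closedNbr_eq_univ, Set.biUnion_insert, Set.union_eq_right.2 hv,
    ← isDomSet_iff_biUnion_closedNbr_eq_univ] at hinsert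

theorem minimal_isDomSet_iff_isDomSet_and_isIrredundant :
    Minimal (IsDomSet G) S ↔ IsDomSet G S ∧ IsIrredundant G S := by
  rw [Set.minimal_iff_forall_sdiff_singleton fun _ _ => IsDomSet.mono]
  refine and_congr_right fun hS => forall₂_congr fun v _ => ?_
  rw [hS.isDomSet_sdiff_singleton_iff, Set.nonempty_iff_ne_empty]

theorem IsDomSet.not_isIrredundant_insert (hS : IsDomSet G S) (hv : v ∉ S) :
    ¬ IsIrredundant G (insert v S) := by
  have hpn : pnSet G (insert v S) v = ∅ :=
    pnSet_eq_empty_of_isDomSet_sdiff_singleton (by rwa [Set.insert_sdiff_self_of_notMem hv])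
  exact fun hirr => (hirr v (Set.mem_insert v S)).ne_empty hpn

theorem minimal_dominating_is_maximal_irredundant_general (hS : Minimal (IsDomSet G) S) :
    IsMaxIrredundant G S :=
  ⟨(minimal_isDomSet_iff_isDomSet_and_isIrredundant.1 hS).2,
    fun _ => hS.prop.not_isIrredundant_insert⟩

end Domination

/-- In a finite simple graph, every minimal dominating set is a
maximal irredundant set. -/
theorem minimal_dominating_is_maximal_irredundant
    {V : Type*} [Fintype V] (G : SimpleGraph V) (S : Set V)
    (hdom : IsDomSet G S)
    (hmin : ∀ T ⊆ S, IsDomSet G T → T = S) :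
    IsMaxIrredundant G S :=
  minimal_dominating_is_maximal_irredundant_general
    ⟨hdom, fun T hT hTS => (hmin T hTS hT).ge⟩
end

section
/- For any finite simple graph G, max{χ(G), ir(G)} ≤ χ_i(G) ≤ χ(G) + ir(G) − 1. -/
/-!  Common definitions: irredundance, irredundance coloring,
irredundance compelling coloring, and related graph parameters. -/

variable {V : Type*}

/-!
A maximal independent set is irredundant and dominating, hence maximal irredundant; so maximal
irredundant sets exist. For the lower bound, an irredundance coloring with `k` colors is proper,
and it is injective on a maximal irredundant set, which therefore has at most `k` elements. For the
upper bound, start from an optimal proper coloring and a maximal irredundant set `R` with `ir(G)`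
elements, and give every vertex of `R` but one a fresh color of its own: this stays proper and
becomes injective on `R`, at the cost of `ir(G) - 1` new colors.
-/

variable {G : SimpleGraph V} {R S : Set V}

theorem mem_pnSet {u v : V} :
    u ∈ pnSet G S v ↔ u ∈ closedNbr G v ∧ ∀ w ∈ S, w ≠ v → u ∉ closedNbr G w := by
  simp [pnSet]

theorem isIrredundant_of_isIndepSet (hS : G.IsIndepSet S) : IsIrredundant G S := fun v hv =>
  ⟨v, mem_pnSet.2 ⟨Set.mem_insert v _, fun _ hw hwv hvw =>
    hvw.elim hwv.symm (hS hw hv hwv)⟩⟩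

theorem IsDomSet.exists_mem_closedNbr (hS : IsDomSet G S) (u : V) :
    ∃ v ∈ S, u ∈ closedNbr G v :=
  (hS u).elim (fun hu => ⟨u, hu, Set.mem_insert u _⟩) fun ⟨v, hv, hvu⟩ => ⟨v, hv, .inr hvu⟩

theorem IsDomSet.isMaxIrredundant (hS : IsDomSet G S) (hirr : IsIrredundant G S) :
    IsMaxIrredundant G S := by
  refine ⟨hirr, fun w hw hinsert => ?_⟩
  obtain ⟨u, hu⟩ := hinsert w (Set.mem_insert w S)
  obtain ⟨v, hv, huv⟩ := hS.exists_mem_closedNbr u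
  exact (mem_pnSet.1 hu).2 v (Set.mem_insert_of_mem w hv) (ne_of_mem_of_not_mem hv hw) huv

theorem isDomSet_of_maximal_isIndepSet (hS : Maximal G.IsIndepSet S) : IsDomSet G S := by
  intro v
  by_contra! ⟨hv, hnonadj⟩
  have hinsert : G.IsIndepSet (insert v S) :=
    Set.pairwise_insert.2 ⟨hS.prop, fun u hu _ => ⟨fun h => hnonadj u hu h.symm, hnonadj u hu⟩⟩
  exact hv (hS.le_of_ge hinsert (Set.subset_insert v S) (Set.mem_insert v S))

theorem exists_maximal_isIndepSet (G : SimpleGraph V) : ∃ S, Maximal G.IsIndepSet S :=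
  zorn_subset {S | G.IsIndepSet S} fun c hc hchain =>
    ⟨⋃₀ c, (Set.pairwise_sUnion hchain.directedOn).2 hc, fun _ => Set.subset_sUnion_of_mem⟩

theorem exists_isMaxIrredundant (G : SimpleGraph V) : ∃ S, IsMaxIrredundant G S :=
  (exists_maximal_isIndepSet G).imp fun _ hS =>
    (isDomSet_of_maximal_isIndepSet hS).isMaxIrredundant (isIrredundant_of_isIndepSet hS.prop)

theorem IsMaxIrredundant.nonempty [Nonempty V] (hR : IsMaxIrredundant G R) : R.Nonempty := by
  by_contra! rfl
  obtain ⟨v⟩ := ‹Nonempty V›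
  refine hR.2 v (Set.notMem_empty v) (isIrredundant_of_isIndepSet ?_)
  simpa only [insert_empty_eq] using Set.pairwise_singleton v _

theorem IsMaxIrredundant.lowerIr_le_ncard (hR : IsMaxIrredundant G R) : lowerIr G ≤ R.ncard :=
  Nat.sInf_le ⟨R, hR, rfl⟩

theorem exists_isMaxIrredundant_ncard_eq_lowerIr (G : SimpleGraph V) :
    ∃ S, IsMaxIrredundant G S ∧ S.ncard = lowerIr G :=
  Nat.sInf_mem (s := {n | ∃ S, IsMaxIrredundant G S ∧ S.ncard = n})
    ((exists_isMaxIrredundant G).imp' Set.ncard fun S hS => ⟨S, hS, rfl⟩)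

namespace IrredColorable

variable {k : ℕ}

theorem of_coloring {α : Type*} [Finite α] (c : G.Coloring α) (hR : IsMaxIrredundant G R)
    (hc : Set.InjOn c R) : IrredColorable G (Nat.card α) :=
  have e := Finite.equivFin α
  ⟨e ∘ c, fun _ _ huv => e.injective.ne (c.valid huv), R, hR, e.injective.comp_injOn hc⟩

theorem colorable (h : IrredColorable G k) : G.Colorable k :=
  let ⟨c, hc, _⟩ := h
  ⟨.mk c fun {u v} => hc u v⟩

theorem lowerIr_le (h : IrredColorable G k) : lowerIr G ≤ k := by
  obtain ⟨c, -, R, hR, hinj⟩ := h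
  calc lowerIr G ≤ R.ncard := hR.lowerIr_le_ncard
    _ = (c '' R).ncard := hinj.ncard_image.symm
    _ ≤ Nat.card (Fin k) := Set.ncard_le_card _
    _ = k := Nat.card_fin k

theorem irChrom_le (h : IrredColorable G k) : irChrom G ≤ k :=
  Nat.sInf_le h

end IrredColorable

theorem irredColorable_card [Finite V] (G : SimpleGraph V) : IrredColorable G (Nat.card V) :=
  let ⟨_, hR⟩ := exists_isMaxIrredundant G
  .of_coloring G.selfColoring hR Function.injective_id.injOn

theorem irredColorable_irChrom [Finite V] (G : SimpleGraph V) : IrredColorable G (irChrom G) :=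
  Nat.sInf_mem (s := {k | IrredColorable G k}) ⟨_, irredColorable_card G⟩

theorem irChrom_eq_zero [IsEmpty V] (G : SimpleGraph V) : irChrom G = 0 :=
  Nat.eq_zero_of_le_zero <| by simpa using (irredColorable_card G).irChrom_le

section FreshColoring

variable {α : Type*}

open Classical in
/-- The recoloring of a proper coloring `c` that gives each vertex `v` of `T` a new color of its
own, encoded as `v` itself in the right summand, and keeps the color of every other vertex. -/
noncomputable def freshColoring (c : G.Coloring α) (T : Set V) : G.Coloring (α ⊕ T) :=
  .mk (fun v => if hv : v ∈ T then .inr ⟨v, hv⟩ else .inl (c v)) fun {u v} huv => by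
    have hcolor : c u ≠ c v := c.valid huv
    have hne : u ≠ v := huv.ne
    split_ifs <;> simp [hcolor, hne]

theorem freshColoring_of_mem (c : G.Coloring α) {T : Set V} {v : V} (hv : v ∈ T) :
    freshColoring c T v = .inr ⟨v, hv⟩ :=
  dif_pos hv

theorem freshColoring_of_notMem (c : G.Coloring α) {T : Set V} {v : V} (hv : v ∉ T) :
    freshColoring c T v = .inl (c v) :=
  dif_neg hv

theorem injOn_freshColoring_insert (c : G.Coloring α) (T : Set V) (r : V) :
    Set.InjOn (freshColoring c T) (insert r T) := by
  intro u hu v hv huv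
  by_cases huT : u ∈ T <;> by_cases hvT : v ∈ T <;>
    simp_all [freshColoring_of_mem, freshColoring_of_notMem]

end FreshColoring

theorem IsMaxIrredundant.irredColorable (hR : IsMaxIrredundant G R) (hfin : R.Finite)
    (hne : R.Nonempty) {n : ℕ} (hn : G.Colorable n) : IrredColorable G (n + R.ncard - 1) := by
  obtain ⟨c⟩ := hn
  obtain ⟨r, hr⟩ := hne
  have : Finite ↥(R \ {r}) := hfin.sdiff
  have hinj : Set.InjOn (freshColoring c (R \ {r})) R := by
    simpa only [Set.insert_sdiff_singleton, Set.insert_eq_of_mem hr] using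
      injOn_freshColoring_insert c (R \ {r}) r
  have hcard : Nat.card (Fin n ⊕ ↥(R \ {r})) = n + R.ncard - 1 := by
    rw [Nat.card_sum, Nat.card_fin, Nat.card_coe_set_eq,
      ← Set.ncard_sdiff_singleton_add_one hr hfin, ← add_assoc, Nat.add_sub_cancel]
  exact hcard ▸ .of_coloring _ hR hinj

/-- `max {χ(G), ir(G)} ≤ χᵢ(G) ≤ χ(G) + ir(G) − 1`. -/
theorem irChrom_bounds {V : Type*} [Fintype V] (G : SimpleGraph V) :
    max G.chromaticNumber (lowerIr G : ℕ∞) ≤ (irChrom G : ℕ∞) ∧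
      (irChrom G : ℕ∞) ≤ G.chromaticNumber + (lowerIr G : ℕ∞) - 1 := by
  have hi : IrredColorable G (irChrom G) := irredColorable_irChrom G
  refine ⟨max_le hi.colorable.chromaticNumber_le (by exact_mod_cast hi.lowerIr_le), ?_⟩
  rcases isEmpty_or_nonempty V with _ | _
  · simp [irChrom_eq_zero]
  · obtain ⟨R, hR, hcard⟩ := exists_isMaxIrredundant_ncard_eq_lowerIr G
    have hχ : G.chromaticNumber ≠ ⊤ :=
      SimpleGraph.chromaticNumber_ne_top_iff_exists.2 ⟨_, hi.colorable⟩
    have hcol : G.Colorable G.chromaticNumber.toNat :=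
      SimpleGraph.colorable_chromaticNumber hi.colorable
    have hle : irChrom G ≤ G.chromaticNumber.toNat + R.ncard - 1 :=
      (hR.irredColorable R.toFinite hR.nonempty hcol).irChrom_le
    rw [← hcard, ← ENat.natCast_toNat hχ]
    exact_mod_cast hle
end

section
/- No tree with at least two vertices admits an irredundance compelling coloring. -/
/-!  Common definitions: irredundance, irredundance coloring,
irredundance compelling coloring, and related graph parameters. -/

variable {V : Type*}

/-! If `u` and `v` are adjacent and `N[v] ⊆ N[u]`, then `v` has no private neighbor with respect to
any set containing both. Adjacent vertices have distinct colors, so some rainbow committee contains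
`u` and `v`, and it is not irredundant. In a tree, take `v` to be a leaf and `u` its neighbor. -/

theorem isRainbowCommittee_iff_bijOn {k : ℕ} {C : V → Fin k} {T : Set V} :
    IsRainbowCommittee C T ↔ Set.BijOn C T Set.univ := by
  constructor
  · intro hT
    refine ⟨Set.mapsTo_univ C T, fun u hu v hv huv ↦ ?_, fun i _ ↦ (hT i).exists⟩
    exact (hT (C v)).unique ⟨hu, huv⟩ ⟨hv, rfl⟩
  · intro hT i
    obtain ⟨v, hv, hvi⟩ := hT.surjOn (Set.mem_univ i)
    exact ⟨v, ⟨hv, hvi⟩, fun w hw ↦ hT.injOn hw.1 hv (hw.2.trans hvi.symm)⟩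

theorem exists_isRainbowCommittee_superset {k : ℕ} {C : V → Fin k}
    (hC : Function.Surjective C) {S : Set V} (hS : Set.InjOn C S) :
    ∃ T, S ⊆ T ∧ IsRainbowCommittee C T := by
  obtain ⟨T, hST, hT⟩ :=
    hS.bijOn_image.exists_extend (Set.subset_univ _) hC.range_eq.superset
  exact ⟨T, hST, isRainbowCommittee_iff_bijOn.mpr hT⟩

theorem IsIrredundant.not_closedNbr_subset {G : SimpleGraph V} {S : Set V} {u v : V}
    (hS : IsIrredundant G S) (hu : u ∈ S) (hv : v ∈ S) (huv : u ≠ v) :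
    ¬ closedNbr G v ⊆ closedNbr G u := by
  intro hsub
  obtain ⟨x, hxv, hx⟩ := hS v hv
  exact hx (Set.mem_biUnion (Set.mem_sdiff_singleton.mpr ⟨hu, huv⟩) (hsub hxv))

theorem IsIRCColoring.not_closedNbr_subset {G : SimpleGraph V} {k : ℕ} {C : V → Fin k}
    (hC : IsIRCColoring G C) {u v : V} (huv : C u ≠ C v) :
    ¬ closedNbr G v ⊆ closedNbr G u := by
  obtain ⟨-, hsurj, hirr⟩ := hC
  have hinj : Set.InjOn C {u, v} := Set.injOn_pair.mpr fun h ↦ absurd h huv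
  obtain ⟨T, hT, hrainbow⟩ := exists_isRainbowCommittee_superset hsurj hinj
  exact (hirr T hrainbow).not_closedNbr_subset (hT (by simp)) (hT (by simp))
    (ne_of_apply_ne C huv)

theorem exists_adj_closedNbr_subset_of_degree_eq_one {G : SimpleGraph V} {v : V}
    [Fintype (G.neighborSet v)] (hv : G.degree v = 1) :
    ∃ u, G.Adj u v ∧ closedNbr G v ⊆ closedNbr G u := by
  obtain ⟨u, hvu, hunique⟩ := SimpleGraph.degree_eq_one_iff_existsUnique_adj.mp hv
  refine ⟨u, hvu.symm, ?_⟩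
  rintro x (rfl | hvx)
  · exact Or.inr hvu.symm
  · exact Or.inl (hunique x hvx)

theorem tree_not_IRCColorable_general (G : SimpleGraph V) {u v : V} (huv : G.Adj u v)
    (hsub : closedNbr G v ⊆ closedNbr G u) : ¬ IRCColorable G := by
  rintro ⟨k, C, hC⟩
  exact hC.not_closedNbr_subset (hC.1 u v huv) hsub

/-- no tree with at least two vertices is IRC-colorable. -/
theorem tree_not_IRCColorable {V : Type*} [Fintype V] (G : SimpleGraph V)
    (htree : G.IsTree) (hcard : 2 ≤ Fintype.card V) :
    ¬ IRCColorable G := by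
  classical
  have : Nontrivial V := Fintype.one_lt_card_iff_nontrivial.mp hcard
  obtain ⟨v, hv⟩ := htree.exists_vert_degree_one_of_nontrivial
  obtain ⟨u, huv, hsub⟩ := exists_adj_closedNbr_subset_of_degree_eq_one hv
  exact tree_not_IRCColorable_general G huv hsub
end

section
/- There are infinitely many IRC-colorable graphs with edge-connectivity 1; that is, for every natural number N there exists a connected finite simple graph G of order greater than N such that G has a bridge (edge-connectivity 1) and G admits an irredundance compelling coloring. -/
/-!  Common definitions: irredundance, irredundance coloring,
irredundance compelling coloring, and related graph parameters. -/

variable {V : Type*}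

/-!
In a 2-coloring a rainbow committee consists of two vertices `v`, `w` of different colors. A
neighbor `x` of `v` shares the color of `w`, so it is a private neighbor of `v` unless `x = w`;
an isolated `v` is its own private neighbor. Hence a 2-coloring using both colors is irredundance
compelling as soon as no vertex has exactly one neighbor.
Joining two bipartite graphs of minimum degree at least two by a single edge preserves both
properties and makes that edge a bridge; two even cycles of unbounded length do the job.
-/

variable {W : Type*} {G : SimpleGraph V} {H : SimpleGraph W}

theorem IsRainbowCommittee.exists_diff_singleton_eq {C : V → Fin 2} {T : Set V}
    (hT : IsRainbowCommittee C T) {v : V} (hv : v ∈ T) : ∃ w, C w ≠ C v ∧ T \ {v} = {w} := by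
  obtain ⟨w, ⟨hwT, hwv⟩, hw⟩ := hT (C v + 1)
  have hne : C w ≠ C v := by omega
  refine ⟨w, hne, Set.eq_singleton_iff_unique_mem.mpr ⟨⟨hwT, ne_of_apply_ne C hne⟩, ?_⟩⟩
  rintro x ⟨hxT, hxv⟩
  have hCx : C x ≠ C v := fun h => hxv ((hT (C v)).unique ⟨hxT, h⟩ ⟨hv, rfl⟩)
  exact hw x ⟨hxT, by omega⟩

theorem pnSet_eq_of_diff_singleton_eq {S : Set V} {v w : V} (h : S \ {v} = {w}) :
    pnSet G S v = closedNbr G v \ closedNbr G w := by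
  simp [pnSet, h]

theorem IsProperColoring.neighborSet_eq_singleton {C : V → Fin 2} (hC : IsProperColoring G C)
    {v w : V} (hwv : C w ≠ C v) (hsub : closedNbr G v ⊆ closedNbr G w) :
    G.neighborSet v = {w} := by
  have hadj : G.Adj w v :=
    (hsub (Set.mem_insert v _)).resolve_left (ne_of_apply_ne C hwv).symm
  refine Set.eq_singleton_iff_unique_mem.mpr ⟨hadj.symm, fun x hvx => ?_⟩
  have hCx : C w = C x := by have := hC v x hvx; omega
  exact (hsub (Set.mem_insert_of_mem v hvx)).resolve_right fun hwx => hC w x hwx hCx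

theorem IsProperColoring.isIRCColoring {C : V → Fin 2} (hC : IsProperColoring G C)
    (hsurj : Function.Surjective C) (hleaf : ∀ v w, G.neighborSet v ≠ {w}) :
    IsIRCColoring G C := by
  refine ⟨hC, hsurj, fun T hT v hv => ?_⟩
  obtain ⟨w, hwv, hTw⟩ := hT.exists_diff_singleton_eq hv
  rw [pnSet_eq_of_diff_singleton_eq hTw, Set.sdiff_nonempty]
  exact fun hsub => hleaf v w (hC.neighborSet_eq_singleton hwv hsub)

theorem ircColorable_of_isBipartite (hG : G.IsBipartite) (hbot : G ≠ ⊥)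
    (hleaf : ∀ v w, G.neighborSet v ≠ {w}) : IRCColorable G := by
  obtain ⟨C⟩ := hG
  obtain ⟨a, b, hab⟩ := SimpleGraph.ne_bot_iff_exists_adj.mp hbot
  have hsurj : Function.Surjective C := fun i => by
    have hCab := C.valid hab
    obtain h | h : C a = i ∨ C b = i := by omega
    exacts [⟨a, h⟩, ⟨b, h⟩]
  have hC : IsProperColoring G C := fun _ _ => C.valid
  exact ⟨2, C, hC.isIRCColoring hsurj hleaf⟩

theorem isIrredundant_preimage_iso (f : G ≃g H) {T : Set W} :
    IsIrredundant G (f ⁻¹' T) ↔ IsIrredundant H T := by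
  have hnbr (v : V) : closedNbr G v = f ⁻¹' closedNbr H (f v) := by
    ext x
    simp [closedNbr, f.map_adj_iff]
  have hpn (v : V) : pnSet G (f ⁻¹' T) v = f ⁻¹' pnSet H T (f v) := by
    ext x
    simp [pnSet, hnbr, f.surjective.forall]
  simp [IsIrredundant, hpn, f.surjective.forall, f.surjective.nonempty_preimage]

theorem isRainbowCommittee_preimage_equiv (f : V ≃ W) {k : ℕ} {C : W → Fin k} {T : Set W} :
    IsRainbowCommittee (C ∘ f) (f ⁻¹' T) ↔ IsRainbowCommittee C T :=
  forall_congr' fun _ => f.existsUnique_congr fun _ => Iff.rfl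

theorem IRCColorable.of_iso (f : G ≃g H) (hH : IRCColorable H) : IRCColorable G := by
  obtain ⟨k, C, hC, hsurj, hirr⟩ := hH
  refine ⟨k, C ∘ f, fun u v huv => hC _ _ (f.map_adj_iff.mpr huv),
    hsurj.comp f.surjective, fun S hS => ?_⟩
  obtain ⟨T, rfl⟩ := f.injective.preimage_surjective S
  exact (isIrredundant_preimage_iso f).mpr
    (hirr T ((isRainbowCommittee_preimage_equiv f.toEquiv).mp hS))

theorem isBridge_of_isBridge_map (f : G →g H) (hf : Function.Injective f) {e : Sym2 V}
    (he : H.IsBridge (e.map f)) : G.IsBridge e := by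
  induction e with | h u v
  rw [SimpleGraph.isBridge_iff_forall_walk_mem_edges]
  intro p
  have hp := SimpleGraph.isBridge_iff_forall_walk_mem_edges.mp he (p.map f)
  rw [SimpleGraph.Walk.edges_map] at hp
  exact (List.mem_map_of_injective (Sym2.map.injective hf)).mp hp

open SimpleGraph in
/-- The disjoint union of `G` and `H` with an extra edge from the vertex `v` of `G` to the vertex
`w` of `H`. -/
def bridgedSum (G : SimpleGraph V) (H : SimpleGraph W) (v : V) (w : W) : SimpleGraph (V ⊕ W) :=
  (G ⊕g H) ⊔ edge (.inl v) (.inr w)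

namespace bridgedSum

open SimpleGraph

variable {v : V} {w : W}

theorem connected (hG : G.Connected) (hH : H.Connected) : (bridgedSum G H v w).Connected :=
  hG.sum_sup_edge hH

theorem isBridge : (bridgedSum G H v w).IsBridge s(.inl v, .inr w) :=
  isBridge_sup_edge.mpr (.of_not_reachable (not_reachable_sum_inl_inr v w))

theorem colorable {n : ℕ} (hn : 2 ≤ n) (hG : G.Colorable n) (hH : H.Colorable n) :
    (bridgedSum G H v w).Colorable n := by
  obtain ⟨⟨CG⟩, ⟨CH⟩⟩ := hG, hH
  have : Nontrivial (Fin n) := Fin.nontrivial_iff_two_le.mpr hn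
  obtain ⟨c, hc⟩ := exists_ne (CG v)
  -- Permuting the colors of `H` makes the two ends of the new edge differ in color.
  let C := CG.sum (H.recolorOfEquiv (Equiv.swap (CH w) c) CH)
  have hCvw : C (.inl v) ≠ C (.inr w) :=
    ((Equiv.swap_apply_left (CH w) c).trans_ne hc).symm
  refine ⟨Coloring.mk C fun {x y} hxy => ?_⟩
  obtain hxy | hxy := hxy
  · exact C.valid hxy
  · obtain ⟨⟨rfl, rfl⟩ | ⟨rfl, rfl⟩, -⟩ := (edge_adj _ _ _ _).mp hxy
    exacts [hCvw, hCvw.symm]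

theorem neighborSet_nontrivial (hG : ∀ a, (G.neighborSet a).Nontrivial)
    (hH : ∀ b, (H.neighborSet b).Nontrivial) (x : V ⊕ W) :
    ((bridgedSum G H v w).neighborSet x).Nontrivial := by
  have hsum : ((G ⊕g H).neighborSet x).Nontrivial := by
    cases x with
    | inl a => exact neighborSet_sum_inl (H := H) a ▸ (hG a).image Sum.inl_injective
    | inr b => exact neighborSet_sum_inr (G := G) b ▸ (hH b).image Sum.inr_injective
  exact hsum.mono (neighborSet_mono le_sup_left x)

theorem ircColorable (hGbip : G.IsBipartite) (hHbip : H.IsBipartite)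
    (hG : ∀ a, (G.neighborSet a).Nontrivial) (hH : ∀ b, (H.neighborSet b).Nontrivial) :
    IRCColorable (bridgedSum G H v w) :=
  ircColorable_of_isBipartite (colorable le_rfl hGbip hHbip)
    (ne_bot_iff_exists_adj.mpr ⟨.inl v, .inr w, by simp [bridgedSum, edge_adj]⟩)
    fun x _ => (neighborSet_nontrivial hG hH x).ne_singleton

end bridgedSum

theorem cycleGraph_neighborSet_nontrivial {n : ℕ} (v : Fin (n + 3)) :
    ((SimpleGraph.cycleGraph (n + 3)).neighborSet v).Nontrivial := by
  rw [← SimpleGraph.coe_neighborFinset, Finset.nontrivial_coe, ← Finset.one_lt_card_iff_nontrivial,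
    SimpleGraph.card_neighborFinset_eq_degree, SimpleGraph.cycleGraph_degree_three_le]
  exact one_lt_two

theorem cycleGraph_isBipartite_of_even {n : ℕ} (hn : Even n) :
    (SimpleGraph.cycleGraph n).IsBipartite :=
  (SimpleGraph.cycleGraph.bicoloring_of_even n hn).colorable

/-- there are infinitely many IRC-colorable connected graphs
with a bridge (edge-connectivity 1). -/
theorem infinitely_many_IRCColorable_with_bridge (N : ℕ) :
    ∃ (n : ℕ) (G : SimpleGraph (Fin n)), N < n ∧ G.Connected ∧
      (∃ e : Sym2 (Fin n), G.IsBridge e) ∧ IRCColorable G := by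
  let Z := SimpleGraph.cycleGraph (2 * N + 4)
  let B := bridgedSum Z Z 0 0
  have hconn : B.Connected :=
    bridgedSum.connected SimpleGraph.cycleGraph_connected SimpleGraph.cycleGraph_connected
  have hbridge : B.IsBridge s(.inl 0, .inr 0) := bridgedSum.isBridge
  have hbip : Z.IsBipartite := cycleGraph_isBipartite_of_even ⟨N + 2, by ring⟩
  have hirc : IRCColorable B := bridgedSum.ircColorable hbip hbip
    cycleGraph_neighborSet_nontrivial cycleGraph_neighborSet_nontrivial
  let f : B ≃g B.overFin rfl := B.overFinIso rfl
  refine ⟨_, B.overFin rfl, ?_, f.connected_iff.mp hconn, ⟨s(f (.inl 0), f (.inr 0)), ?_⟩,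
    hirc.of_iso f.symm⟩
  · simp only [Fintype.card_sum, Fintype.card_fin]
    omega
  · exact isBridge_of_isBridge_map f.symm.toHom f.symm.injective (by simpa using hbridge)
end

section
/- Let G be a finite simple graph such that χ_d(G) = γ(G). Then G admits an irredundance compelling coloring and χ_irc(G) ≥ γ(G). -/
/-!  Common definitions: irredundance, irredundance coloring,
irredundance compelling coloring, and related graph parameters. -/

variable {V : Type*}

/-! Every rainbow committee of a dominator coloring is a dominating set, because a vertex dominating
a color class is dominated by the member of the committee in that class. A committee has one vertex
per color, so in a dominator coloring with `γ(G)` colors it is a minimum dominating set. Minimum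
dominating sets are irredundant: a vertex without private neighbors could be removed. -/

/-- `v` dominates the color class `i` of `C`: it is adjacent to every vertex of the class, or it is
the only vertex of the class. An empty class is dominated by every vertex. -/
def DominatesColorClass (G : SimpleGraph V) {k : ℕ} (C : V → Fin k) (v : V) (i : Fin k) : Prop :=
  (∀ u, C u = i → G.Adj v u) ∨ {u | C u = i} = {v}

/-- `C` is a dominator coloring of `G`: a proper coloring, onto its `k` colors, in which every
vertex dominates some color class. This is the property of `C` occurring in `DominatorColorable`. -/
def IsDominatorColoring (G : SimpleGraph V) {k : ℕ} (C : V → Fin k) : Prop :=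
  IsProperColoring G C ∧ Function.Surjective C ∧ ∀ v, ∃ i, DominatesColorClass G C v i

section

variable {G : SimpleGraph V} {S T : Set V} {v : V} {k : ℕ} {C : V → Fin k}

theorem isDomSet_iff_biUnion_closedNbr : IsDomSet G S ↔ ⋃ w ∈ S, closedNbr G w = Set.univ := by
  simp only [IsDomSet, closedNbr, Set.eq_univ_iff_forall, Set.mem_iUnion₂, Set.mem_insert_iff,
    SimpleGraph.mem_neighborSet, exists_prop, and_or_left, exists_or, exists_eq_right']

theorem IsDomSet.sdiff_singleton (hS : IsDomSet G S) (hv : pnSet G S v = ∅) :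
    IsDomSet G (S \ {v}) := by
  rw [isDomSet_iff_biUnion_closedNbr] at hS ⊢
  refine Set.univ_subset_iff.mp (hS ▸ Set.iUnion₂_subset fun w hw => ?_)
  obtain rfl | hwv := eq_or_ne w v
  · exact Set.sdiff_eq_empty.mp hv
  · exact Set.subset_biUnion_of_mem (u := closedNbr G) (show w ∈ S \ {v} from ⟨hw, hwv⟩)

theorem isIrredundant_of_minimal_isDomSet (hS : Minimal (IsDomSet G) S) : IsIrredundant G S := by
  intro v hv
  by_contra hpn
  have hdom : IsDomSet G (S \ {v}) :=
    hS.prop.sdiff_singleton (Set.not_nonempty_iff_eq_empty.mp hpn)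
  exact (hS.le_of_le hdom Set.sdiff_subset hv).2 rfl

theorem IsDomSet.domNum_le_ncard (hS : IsDomSet G S) : domNum G ≤ S.ncard :=
  Nat.sInf_le ⟨S, hS, rfl⟩

theorem IsDomSet.minimal_of_ncard_le_domNum (hS : IsDomSet G S) (hfin : S.Finite)
    (hcard : S.ncard ≤ domNum G) : Minimal (IsDomSet G) S :=
  ⟨hS, fun _ hT hTS =>
    (Set.eq_of_subset_of_ncard_le hTS (hcard.trans hT.domNum_le_ncard) hfin).ge⟩

theorem IsRainbowCommittee.bijOn (hT : IsRainbowCommittee C T) : Set.BijOn C T Set.univ :=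
  ⟨Set.mapsTo_univ C T, fun u hu _ hv huv => (hT (C u)).unique ⟨hu, rfl⟩ ⟨hv, huv.symm⟩,
    fun i _ => (hT i).exists⟩

theorem IsRainbowCommittee.finite (hT : IsRainbowCommittee C T) : T.Finite :=
  hT.bijOn.finite_iff_finite.mpr Set.finite_univ

theorem IsRainbowCommittee.ncard_eq (hT : IsRainbowCommittee C T) : T.ncard = k := by
  rw [hT.bijOn.ncard_eq, Set.ncard_univ, Nat.card_fin]

theorem IsRainbowCommittee.isDomSet (hT : IsRainbowCommittee C T)
    (hC : ∀ v, ∃ i, DominatesColorClass G C v i) : IsDomSet G T := by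
  intro v
  obtain ⟨i, hi⟩ := hC v
  obtain ⟨u, huT, hui⟩ := (hT i).exists
  obtain hadj | hclass := hi
  · exact Or.inr ⟨u, huT, (hadj u hui).symm⟩
  · have huv : u = v := hclass.subset hui
    exact Or.inl (huv ▸ huT)

theorem IsDominatorColoring.isIRCColoring_of_le_domNum (hC : IsDominatorColoring G C)
    (hk : k ≤ domNum G) : IsIRCColoring G C := by
  obtain ⟨hproper, hsurj, hdom⟩ := hC
  refine ⟨hproper, hsurj, fun T hT => isIrredundant_of_minimal_isDomSet ?_⟩
  exact (hT.isDomSet hdom).minimal_of_ncard_le_domNum hT.finite (hT.ncard_eq.trans_le hk)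

theorem isDominatorColoring_of_bijective (hC : Function.Bijective C) : IsDominatorColoring G C :=
  ⟨fun _ _ huv h => huv.ne (hC.injective h), hC.surjective, fun v =>
    ⟨C v, Or.inr (Set.ext fun _ => hC.injective.eq_iff)⟩⟩

theorem exists_isDominatorColoring_domChrom [Finite V] (G : SimpleGraph V) :
    ∃ C : V → Fin (domChrom G), IsDominatorColoring G C :=
  Nat.sInf_mem (s := {k | DominatorColorable G k})
    ⟨Nat.card V, _, isDominatorColoring_of_bijective (Finite.equivFin V).bijective⟩

theorem IsIRCColoring.le_ircChrom [Finite V] (hC : IsIRCColoring G C) : k ≤ ircChrom G := by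
  refine le_csSup ⟨Nat.card V, ?_⟩ ⟨C, hC⟩
  rintro m ⟨D, -, hsurj, -⟩
  simpa only [Nat.card_fin] using Nat.card_le_card_of_surjective D hsurj

end

/-- if `χ_d(G) = γ(G)` then `G` is IRC-colorable and
`χ_irc(G) ≥ γ(G)`. -/
theorem IRCColorable_of_domChrom_eq_domNum
    {V : Type*} [Fintype V] (G : SimpleGraph V)
    (h : domChrom G = domNum G) :
    IRCColorable G ∧ domNum G ≤ ircChrom G := by
  obtain ⟨C, hdom⟩ := exists_isDominatorColoring_domChrom G
  have hirc : IsIRCColoring G C := hdom.isIRCColoring_of_le_domNum h.le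
  exact ⟨⟨domChrom G, C, hirc⟩, h.ge.trans hirc.le_ircChrom⟩
end
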